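/- arXiv:2108.12312 — 2 statements merged into one kernel-verified Lean document; each statement's English description precedes it below -/
import Mathlib

section
/- Let p, q ∈ R be idempotents. Then p - q is group invertible if and only if p - q1 and q4 are group invertible and the following hold: (p-q1)^# * q2 = q2 * q4^#, q2 * q4^π = 0, (p-q1)^π * q2 = 0, q3 * (p-q1)^# = q4^# * q3, q4^π * q3 = 0, q3 * (p-q1)^π = 0. In this case (p - q)^# = (p-q1)^#*(p-q1) - (p-q1)^#*q2 - q4^#*q3 - q4^#*q4. -/
/-!
For idempotents `p` and `q`, the square `(p - q) ^ 2` commutes with both of them, and its Peirce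
corners with respect to `p` are `p - q1` and `q4`. Hence `(p - q) ^ 2` is group invertible iff
`p - q1` and `q4` are, and `gi` of each corner is the corner of `gi ((p - q) ^ 2)`; the two
intertwining relations hold because `gi ((p - q) ^ 2)` lies in the double commutant and so commutes
with `q2` and `q3`.

An element `a` is group invertible iff `a ^ 2` is and `a * sp (a ^ 2) = 0`, and then
`gi a = a * gi (a ^ 2)`. For `a = p - q` the diagonal corners are killed by `sp (a ^ 2)` in any
case, so `a * sp (a ^ 2) = 0` says that `sp (a ^ 2)` kills `q2` and `q3`, which is what the
remaining four conditions express.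
-/

variable {R : Type*} [Ring R]

/-- `c` is a group inverse of `a`. -/
def IsGroupInvOf (a c : R) : Prop := a * c * a = a ∧ c * a * c = c ∧ a * c = c * a

/-- `a` is group invertible. -/
def GroupInvertible (a : R) : Prop := ∃ c, IsGroupInvOf a c

/-- The group inverse `a^#` (junk value `0` if it does not exist). -/
noncomputable def gi (a : R) : R :=
  haveI := Classical.dec (GroupInvertible a)
  if h : GroupInvertible a then h.choose else 0

/-- The spectral idempotent `a^π = 1 - a * a^#`. -/
noncomputable def sp (a : R) : R := 1 - a * gi a

section GroupInverse

variable {a b c d e s s' t : R}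

namespace IsGroupInvOf

lemma commute (h : IsGroupInvOf a c) : Commute a c := h.2.2

lemma commute_of_commute (h : IsGroupInvOf a c) (ht : Commute a t) : Commute c t := by
  obtain ⟨hac, hca, hcomm⟩ := h
  have ha_left : c * c * (a * a * a) = a := by grind
  have ha_right : a * a * a * (c * c) = a := by grind
  have hc_left : c * c * a = c := by rw [mul_assoc, ← hcomm, ← mul_assoc, hca]
  have hc_right : a * (c * c) = c := by rw [← mul_assoc, hcomm, hca]
  have ht_cube : a * a * a * t = t * (a * a * a) := (ht.mul_left ht).mul_left ht
  calc c * t = c * c * (a * t) := by rw [← mul_assoc, hc_left]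
    _ = c * c * (t * (a * a * a * (c * c))) := by rw [ht.eq, ha_right]
    _ = c * c * (t * (a * a * a)) * (c * c) := by simp only [mul_assoc]
    _ = c * c * (a * a * a) * t * (c * c) := by rw [← ht_cube, ← mul_assoc (c * c)]
    _ = t * (a * (c * c)) := by rw [ha_left, ht.eq, mul_assoc]
    _ = t * c := by rw [hc_right]

lemma unique (hc : IsGroupInvOf a c) (hd : IsGroupInvOf a d) : c = d := by
  have hproj : a * c = a * d :=
    calc a * c = a * d * (a * c) := by rw [← mul_assoc, hd.1]
      _ = d * a * (c * a) := by rw [hd.commute.eq, hc.commute.eq]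
      _ = d * (a * c * a) := by simp only [mul_assoc]
      _ = a * d := by rw [hc.1, hd.commute.eq]
  calc c = c * (a * c) := by rw [← mul_assoc, hc.2.1]
    _ = c * a * d := by rw [hproj, mul_assoc]
    _ = d * a * d := by rw [← hc.commute.eq, hproj, hd.commute.eq]
    _ = d := hd.2.1

lemma of_isIdempotentElem (hs : IsIdempotentElem s) : IsGroupInvOf s s :=
  ⟨by rw [hs.eq, hs.eq], by rw [hs.eq, hs.eq], rfl⟩

lemma mul_of_commute (hab : Commute a b) (ha : IsGroupInvOf a c) (hb : IsGroupInvOf b d) :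
    IsGroupInvOf (a * b) (c * d) := by
  have hcb : Commute c b := ha.commute_of_commute hab
  have had : Commute a d := (hb.commute_of_commute hab.symm).symm
  have hcd : Commute c d := ha.commute_of_commute had
  refine ⟨?_, ?_, ?_⟩
  · rw [hcb.symm.mul_mul_mul_comm, (hab.symm.mul_left had.symm).mul_mul_mul_comm, ha.1, hb.1]
  · rw [had.symm.mul_mul_mul_comm, (hcd.symm.mul_left hcb.symm).mul_mul_mul_comm, ha.2.1, hb.2.1]
  · exact ((ha.commute.mul_right had).mul_left (hcb.symm.mul_right hb.commute)).eq

lemma mul_eq_zero_left (h : IsGroupInvOf a c) (hat : a * t = 0) : c * t = 0 := by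
  rw [← h.2.1, mul_assoc c, h.commute.eq, mul_assoc, mul_assoc, hat, mul_zero, mul_zero]

lemma mul_eq_zero_right (h : IsGroupInvOf a c) (hta : t * a = 0) : t * c = 0 := by
  rw [← h.2.1, ← h.commute.eq, ← mul_assoc, ← mul_assoc, hta, zero_mul, zero_mul]

lemma add_of_mul_eq_zero (ha : IsGroupInvOf a c) (hb : IsGroupInvOf b d) (hab : a * b = 0)
    (hba : b * a = 0) : IsGroupInvOf (a + b) (c + d) := by
  have hcb : c * b = 0 := ha.mul_eq_zero_left hab
  have hda : d * a = 0 := hb.mul_eq_zero_left hba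
  have had : a * d = 0 := hb.mul_eq_zero_right hab
  have hbc : b * c = 0 := ha.mul_eq_zero_right hba
  have hleft : (a + b) * (c + d) = a * c + b * d := by
    rw [add_mul, mul_add, mul_add, had, hbc, add_zero, zero_add]
  have hright : (c + d) * (a + b) = c * a + d * b := by
    rw [add_mul, mul_add, mul_add, hcb, hda, add_zero, zero_add]
  refine ⟨?_, ?_, ?_⟩
  · rw [hleft, add_mul, mul_add, mul_add, ha.1, hb.1, mul_assoc a, mul_assoc b, hcb, hda,
      mul_zero, mul_zero, add_zero, zero_add]
  · rw [hright, add_mul, mul_add, mul_add, ha.2.1, hb.2.1, mul_assoc c, mul_assoc d, had, hbc,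
      mul_zero, mul_zero, add_zero, zero_add]
  · rw [hleft, hright, ha.commute.eq, hb.commute.eq]

lemma of_sq (h : IsGroupInvOf (a ^ 2) e) (ha : a * (a ^ 2 * e) = a) : IsGroupInvOf a (a * e) := by
  have hea : Commute e a := h.commute_of_commute (Commute.pow_self a 2)
  have hleft : a * (a * e) = a ^ 2 * e := by rw [← mul_assoc, sq]
  have hright : a * e * a = a ^ 2 * e := by rw [mul_assoc, hea.eq, hleft]
  refine ⟨?_, ?_, ?_⟩
  · rw [mul_assoc, hright, ha]
  · rw [mul_assoc (a * e), hleft, mul_assoc, ← mul_assoc e, h.2.1]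
  · rw [hleft, hright]

lemma gi_eq (h : IsGroupInvOf a c) : gi a = c := by
  have hinv : GroupInvertible a := ⟨c, h⟩
  rw [gi, dif_pos hinv]
  exact hinv.choose_spec.unique h

end IsGroupInvOf

namespace GroupInvertible

lemma isGroupInvOf_gi (ha : GroupInvertible a) : IsGroupInvOf a (gi a) := by
  obtain ⟨c, hc⟩ := ha
  rwa [hc.gi_eq]

lemma commute_gi (ha : GroupInvertible a) (hat : Commute a t) : Commute (gi a) t :=
  ha.isGroupInvOf_gi.commute_of_commute hat

lemma commute_sp (ha : GroupInvertible a) (hat : Commute a t) : Commute (sp a) t :=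
  (Commute.one_left t).sub_left (hat.mul_left (ha.commute_gi hat))

lemma mul_sp (ha : GroupInvertible a) : a * sp a = 0 := by
  rw [← (ha.commute_sp (Commute.refl a)).eq, sp, sub_mul, one_mul, ha.isGroupInvOf_gi.1, sub_self]

end GroupInvertible

lemma mul_sp_eq_zero_iff : t * sp a = 0 ↔ t * (a * gi a) = t := by
  rw [sp, mul_sub, mul_one, sub_eq_zero, eq_comm]

lemma groupInvertible_iff_sq :
    GroupInvertible a ↔ GroupInvertible (a ^ 2) ∧ a * sp (a ^ 2) = 0 := by
  constructor
  · rintro ⟨c, hc⟩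
    have hsq : IsGroupInvOf (a ^ 2) (c ^ 2) := by
      simpa only [sq] using hc.mul_of_commute (Commute.refl a) hc
    refine ⟨⟨_, hsq⟩, ?_⟩
    have hself : a * (a * c) = a := by rw [hc.commute.eq, ← mul_assoc, hc.1]
    rw [mul_sp_eq_zero_iff, hsq.gi_eq, ← hc.commute.mul_pow, sq, ← mul_assoc, hself, hself]
  · rintro ⟨hsq, ha⟩
    exact ⟨_, hsq.isGroupInvOf_gi.of_sq (mul_sp_eq_zero_iff.mp ha)⟩

lemma GroupInvertible.gi_eq_mul_gi_sq (ha : GroupInvertible a) : gi a = a * gi (a ^ 2) := by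
  obtain ⟨hsq, hsp⟩ := groupInvertible_iff_sq.mp ha
  exact (hsq.isGroupInvOf_gi.of_sq (mul_sp_eq_zero_iff.mp hsp)).gi_eq

lemma IsGroupInvOf.corner (h : IsGroupInvOf a c) (hs : IsIdempotentElem s) (has : Commute a s) :
    IsGroupInvOf (s * a) (s * c) :=
  (IsGroupInvOf.of_isIdempotentElem hs).mul_of_commute has.symm h

lemma groupInvertible_iff_corners (hs : IsIdempotentElem s) (has : Commute a s) :
    GroupInvertible a ↔ GroupInvertible (s * a) ∧ GroupInvertible ((1 - s) * a) := by
  constructor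
  · rintro ⟨c, hc⟩
    exact ⟨⟨_, hc.corner hs has⟩, ⟨_, hc.corner hs.one_sub ((Commute.one_right a).sub_right has)⟩⟩
  · rintro ⟨⟨c, hc⟩, ⟨d, hd⟩⟩
    have hsum : s * a + (1 - s) * a = a := by rw [← add_mul, add_sub_cancel, one_mul]
    have hleft : s * a * ((1 - s) * a) = 0 := by
      rw [← has.eq, mul_assoc, ← mul_assoc s, hs.mul_one_sub_self, zero_mul, mul_zero]
    have hright : (1 - s) * a * (s * a) = 0 := by
      rw [mul_assoc, ← mul_assoc a, has.eq, mul_assoc s, ← mul_assoc, hs.one_sub_mul_self, zero_mul]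
    exact ⟨c + d, hsum ▸ hc.add_of_mul_eq_zero hd hleft hright⟩

namespace GroupInvertible

lemma gi_corner (ha : GroupInvertible a) (hs : IsIdempotentElem s) (has : Commute a s) :
    gi (s * a) = s * gi a :=
  (ha.isGroupInvOf_gi.corner hs has).gi_eq

lemma gi_corner_mul (ha : GroupInvertible a) (hs : IsIdempotentElem s) (has : Commute a s)
    (hst : s * t = t) : gi (s * a) * t = gi a * t := by
  rw [ha.gi_corner hs has, ← (ha.commute_gi has).eq, mul_assoc, hst]

lemma mul_gi_corner (ha : GroupInvertible a) (hs : IsIdempotentElem s) (has : Commute a s)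
    (hts : t * s = t) : t * gi (s * a) = t * gi a := by
  rw [ha.gi_corner hs has, ← mul_assoc, hts]

lemma sp_corner (ha : GroupInvertible a) (hs : IsIdempotentElem s) (has : Commute a s) :
    sp (s * a) = 1 - s * (a * gi a) := by
  rw [sp, ha.gi_corner hs has, has.mul_mul_mul_comm, hs.eq]

lemma sp_corner_mul (ha : GroupInvertible a) (hs : IsIdempotentElem s) (has : Commute a s)
    (hst : s * t = t) : sp (s * a) * t = sp a * t := by
  rw [ha.sp_corner hs has, ← (has.mul_left (ha.commute_gi has)).eq, sub_mul, mul_assoc, hst, sp,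
    sub_mul]

lemma mul_sp_corner (ha : GroupInvertible a) (hs : IsIdempotentElem s) (has : Commute a s)
    (hts : t * s = t) : t * sp (s * a) = t * sp a := by
  rw [ha.sp_corner hs has, mul_sub, ← mul_assoc, hts, sp, mul_sub]

lemma corner_relations_iff (ha : GroupInvertible a) (hs : IsIdempotentElem s)
    (hs' : IsIdempotentElem s') (has : Commute a s) (has' : Commute a s') (hat : Commute a t) :
    gi (s * a) * (s * t * s') = s * t * s' * gi (s' * a) ∧
      s * t * s' * sp (s' * a) = 0 ∧ sp (s * a) * (s * t * s') = 0 ↔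
        s * t * s' * sp a = 0 := by
  have hleft : s * (s * t * s') = s * t * s' := by rw [mul_assoc, hs.mul_self_mul]
  have hright : s * t * s' * s' = s * t * s' := hs'.mul_mul_self _
  have hcomm : Commute a (s * t * s') := (has.mul_right hat).mul_right has'
  rw [ha.gi_corner_mul hs has hleft, ha.mul_gi_corner hs' has' hright,
    ha.mul_sp_corner hs' has' hright, ha.sp_corner_mul hs has hleft, (ha.commute_gi hcomm).eq,
    (ha.commute_sp hcomm).eq]
  simp only [true_and, and_self]

end GroupInvertible

end GroupInverse

section Idempotents

variable {p q : R}

lemma mul_sq_sub (hp : IsIdempotentElem p) (hq : IsIdempotentElem q) :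
    p * (p - q) ^ 2 = p - p * q * p := by
  simp only [sq, mul_sub, sub_mul, ← mul_assoc, hp.eq, hq.mul_mul_self]
  abel

lemma sq_sub_mul (hp : IsIdempotentElem p) (hq : IsIdempotentElem q) :
    (p - q) ^ 2 * p = p - p * q * p := by
  simp only [sq, mul_sub, sub_mul, mul_assoc, hp.eq, hq.mul_self_mul]
  abel

lemma one_sub_mul_sq_sub (hp : IsIdempotentElem p) (hq : IsIdempotentElem q) :
    (1 - p) * (p - q) ^ 2 = (1 - p) * q * (1 - p) := by
  rw [sub_mul, mul_sq_sub hp hq]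
  simp only [sq, mul_sub, sub_mul, one_mul, mul_one, hp.eq, hq.eq]
  abel

lemma commute_sq_sub_left (hp : IsIdempotentElem p) (hq : IsIdempotentElem q) :
    Commute ((p - q) ^ 2) p :=
  (sq_sub_mul hp hq).trans (mul_sq_sub hp hq).symm

lemma commute_sq_sub_right (hp : IsIdempotentElem p) (hq : IsIdempotentElem q) :
    Commute ((p - q) ^ 2) q := by
  rw [← neg_sub, neg_sq]
  exact commute_sq_sub_left hq hp

lemma sub_eq_peirce (hp : IsIdempotentElem p) (hq : IsIdempotentElem q) :
    p - q = p * (p - q) ^ 2 - p * q * (1 - p) - (1 - p) * q * p - (1 - p) * (p - q) ^ 2 := by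
  rw [mul_sq_sub hp hq, one_sub_mul_sq_sub hp hq]
  noncomm_ring

lemma sub_mul_sp_sq_eq_zero_iff (hp : IsIdempotentElem p) (hq : IsIdempotentElem q)
    (hsq : GroupInvertible ((p - q) ^ 2)) :
    (p - q) * sp ((p - q) ^ 2) = 0 ↔
      p * q * (1 - p) * sp ((p - q) ^ 2) = 0 ∧ (1 - p) * q * p * sp ((p - q) ^ 2) = 0 := by
  constructor
  · intro h
    have hcp : Commute (sp ((p - q) ^ 2)) p := hsq.commute_sp (commute_sq_sub_left hp hq)
    have hcr : Commute (sp ((p - q) ^ 2)) (1 - p) := (Commute.one_right _).sub_right hcp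
    have hupper : p * q * (1 - p) = -(p * (p - q) * (1 - p)) := by
      rw [mul_sub p p, sub_mul, hp.eq, hp.mul_one_sub_self, zero_sub, neg_neg]
    have hlower : (1 - p) * q * p = -((1 - p) * (p - q) * p) := by
      rw [mul_sub, hp.one_sub_mul_self, zero_sub, neg_mul, neg_neg]
    constructor
    · rw [hupper, neg_mul, mul_assoc, ← hcr.eq, ← mul_assoc, mul_assoc p, h, mul_zero, zero_mul,
        neg_zero]
    · rw [hlower, neg_mul, mul_assoc, ← hcp.eq, ← mul_assoc, mul_assoc (1 - p), h, mul_zero,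
        zero_mul, neg_zero]
  · rintro ⟨hupper, hlower⟩
    nth_rw 1 [sub_eq_peirce hp hq]
    rw [sub_mul, sub_mul, sub_mul, hupper, hlower, mul_assoc, mul_assoc, hsq.mul_sp]
    simp only [mul_zero, sub_zero]

lemma gi_sub_eq (hp : IsIdempotentElem p) (hq : IsIdempotentElem q) (h : GroupInvertible (p - q)) :
    gi (p - q) = gi (p - p * q * p) * (p - p * q * p) - gi (p - p * q * p) * (p * q * (1 - p)) -
      gi ((1 - p) * q * (1 - p)) * ((1 - p) * q * p) -
      gi ((1 - p) * q * (1 - p)) * ((1 - p) * q * (1 - p)) := by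
  have hsq : GroupInvertible ((p - q) ^ 2) := (groupInvertible_iff_sq.mp h).1
  have hcp : Commute ((p - q) ^ 2) p := commute_sq_sub_left hp hq
  have hcr : Commute ((p - q) ^ 2) (1 - p) := (Commute.one_right _).sub_right hcp
  have hleft {x : R} : p * (p * q * x) = p * q * x := by rw [mul_assoc, hp.mul_self_mul]
  have hright {x : R} : (1 - p) * ((1 - p) * q * x) = (1 - p) * q * x := by
    rw [mul_assoc, hp.one_sub.mul_self_mul]
  rw [← mul_sq_sub hp hq, ← one_sub_mul_sq_sub hp hq, hsq.gi_corner_mul hp hcp hleft,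
    hsq.gi_corner_mul hp hcp (hp.mul_self_mul _), hsq.gi_corner_mul hp.one_sub hcr hright,
    hsq.gi_corner_mul hp.one_sub hcr (hp.one_sub.mul_self_mul _), ← mul_sub, ← mul_sub, ← mul_sub,
    ← sub_eq_peirce hp hq, (hsq.commute_gi (Commute.pow_self _ 2)).eq, h.gi_eq_mul_gi_sq]

end Idempotents

theorem group_inv_p_sub_q (p q q1 q2 q3 q4 : R) (hp : p * p = p) (hq : q * q = q)
    (h1 : q1 = p * q * p) (h2 : q2 = p * q * (1 - p))
    (h3 : q3 = (1 - p) * q * p) (h4 : q4 = (1 - p) * q * (1 - p)) :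
    (GroupInvertible (p - q) ↔
      GroupInvertible (p - q1) ∧ GroupInvertible q4 ∧
        gi (p - q1) * q2 = q2 * gi q4 ∧ q2 * sp q4 = 0 ∧ sp (p - q1) * q2 = 0 ∧
        q3 * gi (p - q1) = gi q4 * q3 ∧ sp q4 * q3 = 0 ∧ q3 * sp (p - q1) = 0) ∧
    (GroupInvertible (p - q) →
      gi (p - q) = gi (p - q1) * (p - q1) - gi (p - q1) * q2 - gi q4 * q3 - gi q4 * q4) := by
  subst h1 h2 h3 h4
  refine ⟨?_, gi_sub_eq hp hq⟩
  have hcp : Commute ((p - q) ^ 2) p := commute_sq_sub_left hp hq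
  have hcq : Commute ((p - q) ^ 2) q := commute_sq_sub_right hp hq
  have hcr : Commute ((p - q) ^ 2) (1 - p) := (Commute.one_right _).sub_right hcp
  have hr : IsIdempotentElem (1 - p) := IsIdempotentElem.one_sub hp
  rw [groupInvertible_iff_sq, groupInvertible_iff_corners hp hcp, and_assoc,
    ← mul_sq_sub hp hq, ← one_sub_mul_sq_sub hp hq]
  refine and_congr_right fun hdiag => and_congr_right fun hdiag' => ?_
  have hsq : GroupInvertible ((p - q) ^ 2) :=
    (groupInvertible_iff_corners hp hcp).mpr ⟨hdiag, hdiag'⟩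
  rw [sub_mul_sp_sq_eq_zero_iff hp hq hsq, ← hsq.corner_relations_iff hp hr hcp hcr hcq,
    ← hsq.corner_relations_iff hr hp hcr hcp hcq, and_comm (a := (1 - p) * q * p * sp _ = 0),
    eq_comm (b := (1 - p) * q * p * gi _), and_assoc, and_assoc]
end

section
/- Let p, q ∈ R be idempotents. Then p*(1-q) is group invertible if and only if p - q1 is group invertible and (p-q1)^π * q2 = 0. -/
/-!
Suppose `p * a = a`. Then `a` is group invertible if and only if `x = a * p` is group invertible and
`a` lies in the right ideal `x * R`. Indeed, a group inverse `d` of `a` gives the group inverse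
`d * p` of `x`, and `a = a * a * d = x * (a * d)`. Conversely, a group inverse `c` of `x` gives the
group inverse `c * c * a` of `a`, since `a * c = x * c`, `a * a = x * a` and `x * c * a = a`.

As `x^π` annihilates exactly `x * R`, the membership of `a`, equivalently of `a * (1 - p) = a - x`,
in `x * R` says that `x^π * (a * (1 - p)) = 0`. For `a = p * (1 - q)` one has `x = p - q1` and
`a * (1 - p) = -q2`.
-/

variable {R : Type*} [Ring R]

section GroupInverse

variable {a b c d p : R}

theorem GroupInvertible.isGroupInvOf_gi_s10 (h : GroupInvertible a) : IsGroupInvOf a (gi a) := by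
  rw [gi, dif_pos h]
  exact h.choose_spec

theorem IsGroupInvOf.mul_mul_eq_iff_dvd (h : IsGroupInvOf a c) : a * c * b = b ↔ a ∣ b := by
  constructor
  · intro hb
    exact ⟨c * b, by rw [← mul_assoc, hb]⟩
  · rintro ⟨r, rfl⟩
    rw [← mul_assoc, h.1]

theorem GroupInvertible.sp_mul_eq_zero_iff_dvd (h : GroupInvertible a) :
    sp a * b = 0 ↔ a ∣ b := by
  rw [sp, sub_mul, one_mul, sub_eq_zero, eq_comm, h.isGroupInvOf_gi_s10.mul_mul_eq_iff_dvd]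

theorem IsGroupInvOf.mul_eq_of_mul_eq (h : IsGroupInvOf a c) (hpa : p * a = a) : p * c = c := by
  obtain ⟨-, hcac, hcomm⟩ := h
  have hacc : a * c * c = c := by rw [hcomm, hcac]
  rw [← hacc, ← mul_assoc, ← mul_assoc, hpa]

theorem IsGroupInvOf.mul_right (h : IsGroupInvOf a d) (hpa : p * a = a) :
    IsGroupInvOf (a * p) (d * p) := by
  have hpd : p * d = d := h.mul_eq_of_mul_eq hpa
  have absorb (y z : R) (hz : p * z = z) : y * p * (z * p) = y * z * p := by
    rw [mul_assoc y, ← mul_assoc p, hz, mul_assoc]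
  obtain ⟨hada, hdad, hcomm⟩ := h
  refine ⟨?_, ?_, ?_⟩
  · rw [absorb a d hpd, absorb (a * d) a hpa, hada]
  · rw [absorb d a hpa, absorb (d * a) d hpd, hdad]
  · rw [absorb a d hpd, absorb d a hpa, hcomm]

theorem IsGroupInvOf.mul_right_dvd (h : IsGroupInvOf a d) (hpa : p * a = a) : a * p ∣ a := by
  obtain ⟨hada, -, hcomm⟩ := h
  refine ⟨a * d, ?_⟩
  calc a = a * (a * d) := by rw [hcomm, ← mul_assoc, hada]
    _ = a * (p * a * d) := by rw [hpa]
    _ = a * p * (a * d) := by simp only [mul_assoc]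

theorem IsGroupInvOf.of_mul_right (h : IsGroupInvOf (a * p) c) (hpa : p * a = a)
    (hdvd : a * p ∣ a) : IsGroupInvOf a (c * c * a) := by
  have hpc : p * c = c := h.mul_eq_of_mul_eq (by rw [← mul_assoc, hpa])
  have hxca : a * p * c * a = a := h.mul_mul_eq_iff_dvd.mpr hdvd
  have hac : a * c = a * p * c := by rw [mul_assoc, hpc]
  have haa : a * a = a * p * a := by rw [mul_assoc, hpa]
  obtain ⟨-, hcxc, hcomm⟩ := h
  have hleft : a * (c * c * a) = c * a := by
    calc a * (c * c * a) = a * c * c * a := by simp only [mul_assoc]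
      _ = c * a := by rw [hac, hcomm, hcxc]
  have hright : c * c * a * a = c * a := by
    calc c * c * a * a = c * (c * (a * p)) * a := by rw [mul_assoc _ a, haa]; simp only [mul_assoc]
      _ = c * a := by rw [← hcomm, ← mul_assoc, hcxc]
  refine ⟨?_, ?_, hleft.trans hright.symm⟩
  · calc a * (c * c * a) * a = c * (a * p) * a := by rw [hleft, mul_assoc, haa, ← mul_assoc]
      _ = a := by rw [← hcomm, hxca]
  · rw [hright, mul_assoc, hleft, ← mul_assoc]

theorem groupInvertible_iff_mul_right (hpa : p * a = a) :
    GroupInvertible a ↔ GroupInvertible (a * p) ∧ a * p ∣ a := by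
  constructor
  · rintro ⟨d, hd⟩
    exact ⟨⟨d * p, hd.mul_right hpa⟩, hd.mul_right_dvd hpa⟩
  · rintro ⟨⟨c, hc⟩, hdvd⟩
    exact ⟨c * c * a, hc.of_mul_right hpa hdvd⟩

theorem groupInvertible_iff_sp_mul_eq_zero (hpa : p * a = a) :
    GroupInvertible a ↔ GroupInvertible (a * p) ∧ sp (a * p) * (a * (1 - p)) = 0 := by
  rw [groupInvertible_iff_mul_right hpa]
  refine and_congr_right fun hx => ?_
  rw [hx.sp_mul_eq_zero_iff_dvd, mul_sub, mul_one, dvd_sub_self_right]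

end GroupInverse

theorem group_inv_p_qbar_general {p : R} (hp : p * p = p) (q : R) :
    GroupInvertible (p * (1 - q)) ↔
      GroupInvertible (p - p * q * p) ∧ sp (p - p * q * p) * (p * q * (1 - p)) = 0 := by
  have hleft : p * (p * (1 - q)) = p * (1 - q) := by rw [← mul_assoc, hp]
  have hcorner : p * (1 - q) * p = p - p * q * p := by rw [mul_sub, mul_one, sub_mul, hp]
  have hoff : p * (1 - q) * (1 - p) = -(p * q * (1 - p)) := by
    rw [mul_sub p, mul_one, sub_mul, mul_sub p, mul_one, hp, sub_self, zero_sub]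
  rw [groupInvertible_iff_sp_mul_eq_zero hleft, hcorner, hoff, mul_neg, neg_eq_zero]

theorem group_inv_p_qbar (p q q1 q2 q3 q4 : R) (hp : p * p = p) (hq : q * q = q)
    (h1 : q1 = p * q * p) (h2 : q2 = p * q * (1 - p))
    (h3 : q3 = (1 - p) * q * p) (h4 : q4 = (1 - p) * q * (1 - p)) :
    GroupInvertible (p * (1 - q)) ↔ GroupInvertible (p - q1) ∧ sp (p - q1) * q2 = 0 := by
  rw [h1, h2]
  exact group_inv_p_qbar_general hp q
end
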